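/- Every stabilizer code is a CWS code: let H be an abelian subgroup of the Pauli group G_d^n with no nontrivial scalars, let Q = Fix(H) be its fixed subspace, and let K = finrank ℂ Q ≥ 1. Then there exist an abelian subgroup S of G_d^n with no nontrivial scalars satisfying H ≤ S and Nat.card S = d^n, a nonzero vector ψ ∈ Q spanning Fix(S), and elements w_1, …, w_K ∈ G_d^n such that the vectors w_1.mulVec ψ, …, w_K.mulVec ψ form a basis of Q. -/

import Mathlib

open Matrix

noncomputable def q (d : ℕ) : ℂ := Complex.exp (2 * Real.pi * Complex.I / d)

/-- Dot product of two vectors over `ZMod d`. -/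
def dotp {n d : ℕ} (A B : Fin n → ZMod d) : ZMod d := ∑ i, A i * B i

/-- The Pauli word `W(U,V)` with entries `q^{⟨U,J⟩}` at `(J, K)` when `J = K + V`. -/
noncomputable def PauliWord (d n : ℕ) (U V : Fin n → ZMod d) :
    Matrix (Fin n → ZMod d) (Fin n → ZMod d) ℂ :=
  Matrix.of fun J K => if J = K + V then q d ^ (dotp U J).val else 0

/-- The n-qudit Pauli group, as a set of matrices. -/
noncomputable def PauliSet (d n : ℕ) : Set (Matrix (Fin n → ZMod d) (Fin n → ZMod d) ℂ) :=
  {g | ∃ (k : ZMod d) (U V : Fin n → ZMod d), g = q d ^ k.val • PauliWord d n U V}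

/-- The subspace of states fixed by every matrix in `S`. -/
noncomputable def FixSubspace (d n : ℕ) [NeZero d]
    (S : Set (Matrix (Fin n → ZMod d) (Fin n → ZMod d) ℂ)) :
    Submodule ℂ ((Fin n → ZMod d) → ℂ) where
  carrier := {ψ | ∀ s ∈ S, s.mulVec ψ = ψ}
  add_mem' := by
    intro a b ha hb s hs
    simp [Matrix.mulVec_add, ha s hs, hb s hs]
  zero_mem' := by
    intro s hs
    simp [Matrix.mulVec_zero]
  smul_mem' := by
    intro c a ha s hs
    simp [Matrix.mulVec_smul, ha s hs]



/-- The standard additive character of `ZMod d`, i.e. `k ↦ q ^ k`. -/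
noncomputable def ech (d : ℕ) [NeZero d] : AddChar (ZMod d) ℂ := ZMod.stdAddChar

theorem ech_inj {d : ℕ} [NeZero d] {a b : ZMod d} (h : ech d a = ech d b) : a = b :=
  ZMod.injective_stdAddChar h

theorem q_pow {d : ℕ} [NeZero d] (a : ZMod d) : q d ^ a.val = ech d a := by
  rw [ech, ZMod.stdAddChar_apply, ZMod.toCircle_apply, q, ← Complex.exp_nat_mul]
  congr 1
  ring

theorem ech_ne {d : ℕ} [NeZero d] (a : ZMod d) : ech d a ≠ 0 := by
  rw [← q_pow]
  exact pow_ne_zero _ (Complex.exp_ne_zero _)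

/-- General Pauli element. -/
noncomputable def PP (d n : ℕ) [NeZero d] (k : ZMod d) (U V : Fin n → ZMod d) :
    Matrix (Fin n → ZMod d) (Fin n → ZMod d) ℂ :=
  Matrix.of fun J K => if J = K + V then ech d (k + U ⬝ᵥ J) else 0

theorem PP_eq {d n : ℕ} [NeZero d] (k : ZMod d) (U V : Fin n → ZMod d) :
    q d ^ k.val • PauliWord d n U V = PP d n k U V := by
  ext J K
  have : dotp U J = U ⬝ᵥ J := rfl
  simp only [PP, PauliWord, Matrix.smul_apply, Matrix.of_apply, smul_eq_mul, q_pow, this,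
    AddChar.map_add_eq_mul, mul_ite, mul_zero]

theorem mem_Pauli {d n : ℕ} [NeZero d] (g : Matrix (Fin n → ZMod d) (Fin n → ZMod d) ℂ) :
    g ∈ PauliSet d n ↔ ∃ k U V, g = PP d n k U V := by
  simp only [PauliSet, Set.mem_ofPred_eq, PP_eq]

theorem PP_mulVec {d n : ℕ} [NeZero d] (k : ZMod d) (U V : Fin n → ZMod d)
    (x : (Fin n → ZMod d) → ℂ) (J : Fin n → ZMod d) :
    (PP d n k U V).mulVec x J = ech d (k + U ⬝ᵥ J) * x (J - V) := by
  simp only [PP, Matrix.mulVec, dotProduct, Matrix.of_apply, ite_mul, zero_mul]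
  rw [Finset.sum_eq_single (J - V)]
  · simp
  · intro b _ hb
    rw [if_neg]
    rintro rfl
    simp at hb
  · simp

theorem PP_mul {d n : ℕ} [NeZero d] (k k' : ZMod d) (U V U' V' : Fin n → ZMod d) :
    PP d n k U V * PP d n k' U' V' = PP d n (k + k' - U' ⬝ᵥ V) (U + U') (V + V') := by
  apply Matrix.toLin'.injective
  apply LinearMap.ext
  intro x
  ext J
  rw [Matrix.toLin'_mul]
  simp only [LinearMap.comp_apply, Matrix.toLin'_apply, PP_mulVec]
  rw [← mul_assoc, ← AddChar.map_add_eq_mul, add_dotProduct, dotProduct_sub, sub_sub]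
  congr 2
  ring

theorem PP_zero {d n : ℕ} [NeZero d] : PP d n 0 0 0 = 1 := by
  ext J K
  simp [PP, Matrix.one_apply]

theorem PP_comm {d n : ℕ} [NeZero d] (k k' : ZMod d) (U V U' V' : Fin n → ZMod d) :
    PP d n k U V * PP d n k' U' V' =
      ech d (U ⬝ᵥ V' - U' ⬝ᵥ V) • (PP d n k' U' V' * PP d n k U V) := by
  rw [PP_mul, PP_mul]
  ext J K
  simp only [PP, Matrix.smul_apply, Matrix.of_apply, smul_eq_mul, mul_ite, mul_zero,
    ← AddChar.map_add_eq_mul, add_comm V' V, add_comm U' U]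
  congr 2
  ring

theorem PP_inj {d n : ℕ} [NeZero d] {k k' : ZMod d} {U V U' V' : Fin n → ZMod d}
    (h : PP d n k U V = PP d n k' U' V') : k = k' ∧ U = U' ∧ V = V' := by
  have hV : V = V' := by
    have := congrFun (congrFun h V) 0
    simp only [PP, Matrix.of_apply, zero_add, if_true] at this
    by_contra hne
    rw [if_neg hne] at this
    exact ech_ne _ this
  subst hV
  have key : ∀ J, k + U ⬝ᵥ J = k' + U' ⬝ᵥ J := by
    intro J
    have := congrFun (congrFun h J) (J - V)
    simp only [PP, Matrix.of_apply, sub_add_cancel, if_true] at this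
    exact ech_inj this
  have hk : k = k' := by simpa using key 0
  subst hk
  refine ⟨rfl, ?_, rfl⟩
  ext i
  simpa using key (Pi.single i 1)

theorem orth {d n : ℕ} [NeZero d] (V : Fin n → ZMod d) :
    ∑ U : Fin n → ZMod d, ech d (U ⬝ᵥ V) = if V = 0 then (d : ℂ) ^ n else 0 := by
  classical
  let χ : AddChar (Fin n → ZMod d) ℂ :=
    { toFun := fun U => ech d (U ⬝ᵥ V)
      map_zero_eq_one' := by simp
      map_add_eq_mul' := fun a b => by rw [add_dotProduct, AddChar.map_add_eq_mul] }
  have h1 : ∑ U : Fin n → ZMod d, ech d (U ⬝ᵥ V) = ∑ U, χ U := rfl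
  have h2 : χ = 0 ↔ V = 0 := by
    constructor
    · intro h
      ext i
      have h3 : χ (Pi.single i 1) = 1 := by rw [h]; rfl
      have h4 : ech d (Pi.single i 1 ⬝ᵥ V) = ech d 0 := by
        rw [AddChar.map_zero_eq_one]; exact h3
      simpa using ech_inj h4
    · rintro rfl
      ext U
      change ech d (U ⬝ᵥ 0) = 1
      simp
  rw [h1, AddChar.sum_eq_ite]
  simp only [h2, Fintype.card_pi, ZMod.card, Finset.prod_const, Finset.card_univ, Fintype.card_fin]
  push_cast
  rfl

theorem card_perp {d n : ℕ} [NeZero d] (B : AddSubgroup (Fin n → ZMod d)) :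
    Nat.card B * Nat.card {U : Fin n → ZMod d | ∀ V ∈ B, U ⬝ᵥ V = 0} = d ^ n := by
  classical
  have h1 : ∑ U : Fin n → ZMod d, ∑ V : B, ech d (U ⬝ᵥ (V : Fin n → ZMod d)) = (d : ℂ) ^ n := by
    rw [Finset.sum_comm]
    simp only [orth]
    simp
  have h2 : ∀ U : Fin n → ZMod d, ∑ V : B, ech d (U ⬝ᵥ (V : Fin n → ZMod d)) =
      if (∀ V ∈ B, U ⬝ᵥ V = 0) then (Nat.card B : ℂ) else 0 := by
    intro U
    let χ : AddChar B ℂ :=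
      { toFun := fun V => ech d (U ⬝ᵥ (V : Fin n → ZMod d))
        map_zero_eq_one' := by simp
        map_add_eq_mul' := fun a b => by
          rw [AddSubgroup.coe_add, dotProduct_add, AddChar.map_add_eq_mul] }
    have h3 : χ = 0 ↔ ∀ V ∈ B, U ⬝ᵥ V = 0 := by
      constructor
      · intro h V hV
        have h3 : χ ⟨V, hV⟩ = 1 := by rw [h]; rfl
        apply ech_inj (d := d)
        rw [AddChar.map_zero_eq_one]; exact h3
      · intro h
        ext V
        change ech d (U ⬝ᵥ (V : Fin n → ZMod d)) = 1
        rw [h V V.2, AddChar.map_zero_eq_one]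
    have h4 := AddChar.sum_eq_ite χ
    simp only [h3] at h4
    rw [Nat.card_eq_fintype_card]
    exact h4
  simp only [h2] at h1
  rw [← Finset.sum_filter, Finset.sum_const, nsmul_eq_mul] at h1
  have h5 : Nat.card {U : Fin n → ZMod d | ∀ V ∈ B, U ⬝ᵥ V = 0} =
      (Finset.univ.filter fun U : Fin n → ZMod d => ∀ V ∈ B, U ⬝ᵥ V = 0).card := by
    rw [Nat.card_eq_fintype_card]
    exact Fintype.card_subtype _
  rw [h5, mul_comm]
  exact_mod_cast h1

theorem span_top {d n : ℕ} [NeZero d] (x : (Fin n → ZMod d) → ℂ) (hx : x ≠ 0) :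
    Submodule.span ℂ {y | ∃ w ∈ PauliSet d n, y = w.mulVec x} = ⊤ := by
  classical
  obtain ⟨K, hK⟩ := Function.ne_iff.mp hx
  rw [eq_top_iff, ← (Pi.basisFun ℂ (Fin n → ZMod d)).span_eq, Submodule.span_le]
  rintro _ ⟨J, rfl⟩
  have h1 : ∑ U : Fin n → ZMod d, (PP d n (-(U ⬝ᵥ J)) U (J - K)).mulVec x
      ∈ Submodule.span ℂ {y | ∃ w ∈ PauliSet d n, y = w.mulVec x} := by
    refine Submodule.sum_mem _ fun U _ => Submodule.subset_span ⟨_, ?_, rfl⟩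
    rw [mem_Pauli]
    exact ⟨_, _, _, rfl⟩
  have h2 : ∑ U : Fin n → ZMod d, (PP d n (-(U ⬝ᵥ J)) U (J - K)).mulVec x =
      ((d : ℂ) ^ n * x K) • Pi.basisFun ℂ (Fin n → ZMod d) J := by
    ext L
    rw [Finset.sum_apply]
    simp only [PP_mulVec, ← Finset.sum_mul]
    have : ∀ U : Fin n → ZMod d, -(U ⬝ᵥ J) + U ⬝ᵥ L = U ⬝ᵥ (L - J) := by
      intro U; rw [dotProduct_sub]; ring
    simp only [this, orth, sub_eq_zero, Pi.smul_apply, Pi.basisFun_apply, smul_eq_mul,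
      Pi.single_apply]
    split_ifs with h
    · subst h
      simp
    · simp
  rw [h2] at h1
  refine (Submodule.smul_mem_iff _ ?_).mp h1
  have : (d : ℂ) ≠ 0 := Nat.cast_ne_zero.mpr (NeZero.ne d)
  exact mul_ne_zero (pow_ne_zero _ this) hK

theorem pauli_finite {d n : ℕ} [NeZero d] : (PauliSet d n).Finite := by
  refine (Set.finite_range fun t : ZMod d × (Fin n → ZMod d) × (Fin n → ZMod d) =>
    PP d n t.1 t.2.1 t.2.2).subset ?_
  intro g hg
  obtain ⟨k, U, V, rfl⟩ := (mem_Pauli g).mp hg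
  exact ⟨(k, U, V), rfl⟩

/-- averaging operator -/
noncomputable def avg {d n : ℕ} (F : Finset (Matrix (Fin n → ZMod d) (Fin n → ZMod d) ℂ)) :
    Matrix (Fin n → ZMod d) (Fin n → ZMod d) ℂ := (F.card : ℂ)⁻¹ • ∑ s ∈ F, s

theorem avg_proj {d n : ℕ} [NeZero d]
    (F : Finset (Matrix (Fin n → ZMod d) (Fin n → ZMod d) ℂ))
    (h1 : 1 ∈ F) (hmul : ∀ a ∈ F, ∀ b ∈ F, a * b ∈ F) (hinv : ∀ a ∈ F, ∃ b ∈ F, a * b = 1) :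
    LinearMap.IsProj (FixSubspace d n F) (Matrix.toLin' (avg F)) := by
  have hc : (F.card : ℂ) ≠ 0 := Nat.cast_ne_zero.mpr (Finset.card_ne_zero_of_mem h1)
  constructor
  · intro x t ht
    rw [Matrix.toLin'_apply, Matrix.mulVec_mulVec]
    congr 1
    obtain ⟨t', ht', htt⟩ := hinv t ht
    have htt' : t' * t = 1 := mul_eq_one_comm.mp htt
    rw [avg, Matrix.mul_smul, Finset.mul_sum]
    congr 1
    refine Finset.sum_bij' (fun s _ => t * s) (fun s _ => t' * s)
      (fun s hs => hmul _ ht _ hs) (fun s hs => hmul _ ht' _ hs) ?_ ?_ ?_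
    · intro s _; rw [← mul_assoc, htt', one_mul]
    · intro s _; rw [← mul_assoc, htt, one_mul]
    · intro s _; rfl
  · intro x hx
    rw [Matrix.toLin'_apply, avg, Matrix.smul_mulVec, Matrix.sum_mulVec,
      Finset.sum_congr rfl (fun s hs => hx s hs), Finset.sum_const, ← Nat.cast_smul_eq_nsmul ℂ,
      smul_smul, inv_mul_cancel₀ hc, one_smul]

theorem PP_trace {d n : ℕ} [NeZero d] (k : ZMod d) (U V : Fin n → ZMod d)
    (h : (PP d n k U V).trace ≠ 0) : PP d n k U V = ech d k • 1 := by
  have hV : V = 0 := by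
    by_contra hV
    apply h
    apply Finset.sum_eq_zero
    intro J _
    simp [PP, hV]
  subst hV
  have hU : U = 0 := by
    by_contra hU
    apply h
    have := orth U
    rw [if_neg hU] at this
    simp only [Matrix.trace, Matrix.diag_apply, PP, Matrix.of_apply, add_zero, if_true,
      AddChar.map_add_eq_mul, ← Finset.mul_sum]
    simp only [dotProduct_comm U, this, mul_zero]
  subst hU
  ext J K
  simp [PP, Matrix.one_apply]

theorem finrank_fix {d n : ℕ} [NeZero d]
    (F : Finset (Matrix (Fin n → ZMod d) (Fin n → ZMod d) ℂ))
    (hP : (F : Set _) ⊆ PauliSet d n)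
    (h1 : 1 ∈ F) (hmul : ∀ a ∈ F, ∀ b ∈ F, a * b ∈ F) (hinv : ∀ a ∈ F, ∃ b ∈ F, a * b = 1)
    (hscal : ∀ c : ℂ, c • (1 : Matrix (Fin n → ZMod d) (Fin n → ZMod d) ℂ) ∈ F →
      c • (1 : Matrix (Fin n → ZMod d) (Fin n → ZMod d) ℂ) = 1)
    (hcard : F.card = d ^ n) : Module.finrank ℂ (FixSubspace d n F) = 1 := by
  have hc : (F.card : ℂ) ≠ 0 := Nat.cast_ne_zero.mpr (Finset.card_ne_zero_of_mem h1)
  have h := (avg_proj F h1 hmul hinv).trace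
  rw [Matrix.trace_toLin'_eq, avg, Matrix.trace_smul, Matrix.trace_sum,
    Finset.sum_eq_single_of_mem 1 h1] at h
  · rw [Matrix.trace_one, Fintype.card_pi] at h
    simp only [ZMod.card, Finset.prod_const, Finset.card_univ, Fintype.card_fin] at h
    rw [← hcard, smul_eq_mul, inv_mul_cancel₀ hc] at h
    exact_mod_cast h.symm
  · intro b hb hb1
    obtain ⟨k, U, V, rfl⟩ := (mem_Pauli b).mp (hP hb)
    by_contra hne
    have := PP_trace k U V hne
    exact hb1 (this.trans (hscal _ (this ▸ hb)))

theorem span_fix {d n : ℕ} [NeZero d]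
    (F : Finset (Matrix (Fin n → ZMod d) (Fin n → ZMod d) ℂ))
    (hP : (F : Set _) ⊆ PauliSet d n)
    (h1 : 1 ∈ F) (hmul : ∀ a ∈ F, ∀ b ∈ F, a * b ∈ F) (hinv : ∀ a ∈ F, ∃ b ∈ F, a * b = 1)
    (x : (Fin n → ZMod d) → ℂ) (hx : x ≠ 0) (hxF : x ∈ FixSubspace d n F) :
    Submodule.span ℂ {y | y ∈ FixSubspace d n F ∧ ∃ w ∈ PauliSet d n, y = w.mulVec x} =
      FixSubspace d n F := by
  have hp := avg_proj F h1 hmul hinv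
  apply le_antisymm
  · rw [Submodule.span_le]
    exact fun y hy => hy.1
  · intro y hy
    have key : ∀ z ∈ Submodule.span ℂ {y | ∃ w ∈ PauliSet d n, y = w.mulVec x},
        Matrix.toLin' (avg F) z ∈ Submodule.span ℂ
          {y | y ∈ FixSubspace d n F ∧ ∃ w ∈ PauliSet d n, y = w.mulVec x} := by
      intro z hz
      induction hz using Submodule.span_induction with
      | zero => rw [map_zero]; exact Submodule.zero_mem _
      | add a b _ _ ha hb => rw [map_add]; exact Submodule.add_mem _ ha hb
      | smul c a _ ha => rw [map_smul]; exact Submodule.smul_mem _ _ ha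
      | mem a ha =>
        obtain ⟨w, hw, rfl⟩ := ha
        have hs : ∀ s ∈ F, ∃ c : ℂ, s * w = c • (w * s) := by
          intro s hs
          obtain ⟨k, U, V, rfl⟩ := (mem_Pauli s).mp (hP hs)
          obtain ⟨k', U', V', rfl⟩ := (mem_Pauli w).mp hw
          exact ⟨_, PP_comm _ _ _ _ _ _⟩
        choose! c hc using hs
        have h3 : Matrix.toLin' (avg F) (w.mulVec x) =
            ((F.card : ℂ)⁻¹ * ∑ s ∈ F, c s) • w.mulVec x := by
          rw [Matrix.toLin'_apply, avg, Matrix.smul_mulVec, Matrix.sum_mulVec, mul_smul,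
            Finset.sum_smul]
          congr 1
          refine Finset.sum_congr rfl fun s hs => ?_
          rw [Matrix.mulVec_mulVec, hc s hs, Matrix.smul_mulVec, ← Matrix.mulVec_mulVec,
            hxF s hs]
        have h4 := hp.map_mem (w.mulVec x)
        rw [h3] at h4 ⊢
        by_cases h0 : (F.card : ℂ)⁻¹ * ∑ s ∈ F, c s = 0
        · rw [h0, zero_smul]; exact Submodule.zero_mem _
        · exact Submodule.smul_mem _ _ (Submodule.subset_span
            ⟨(Submodule.smul_mem_iff _ h0).mp h4, w, hw, rfl⟩)
    rw [← hp.map_id y hy]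
    apply key
    rw [span_top x hx]; trivial

theorem stabilizer_is_cws (d n : ℕ) [NeZero d] (hd : 2 ≤ d) (hn : 1 ≤ n)
    (H : Set (Matrix (Fin n → ZMod d) (Fin n → ZMod d) ℂ))
    (hHsub : H ⊆ PauliSet d n)
    (hH1 : (1 : Matrix (Fin n → ZMod d) (Fin n → ZMod d) ℂ) ∈ H)
    (hHmul : ∀ a ∈ H, ∀ b ∈ H, a * b ∈ H)
    (hHinv : ∀ a ∈ H, ∃ b ∈ H, a * b = 1)
    (hHcomm : ∀ a ∈ H, ∀ b ∈ H, a * b = b * a)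
    (hHscal : ∀ c : ℂ, c • (1 : Matrix (Fin n → ZMod d) (Fin n → ZMod d) ℂ) ∈ H →
      c • (1 : Matrix (Fin n → ZMod d) (Fin n → ZMod d) ℂ) = 1)
    (hK : 1 ≤ Module.finrank ℂ (FixSubspace d n H)) :
    ∃ S : Set (Matrix (Fin n → ZMod d) (Fin n → ZMod d) ℂ),
      S ⊆ PauliSet d n ∧
      (1 : Matrix (Fin n → ZMod d) (Fin n → ZMod d) ℂ) ∈ S ∧
      (∀ a ∈ S, ∀ b ∈ S, a * b ∈ S) ∧
      (∀ a ∈ S, ∃ b ∈ S, a * b = 1) ∧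
      (∀ a ∈ S, ∀ b ∈ S, a * b = b * a) ∧
      (∀ c : ℂ, c • (1 : Matrix (Fin n → ZMod d) (Fin n → ZMod d) ℂ) ∈ S →
        c • (1 : Matrix (Fin n → ZMod d) (Fin n → ZMod d) ℂ) = 1) ∧
      H ⊆ S ∧ Nat.card S = d ^ n ∧
      ∃ ψ ∈ FixSubspace d n H, ψ ≠ 0 ∧
        FixSubspace d n S = Submodule.span ℂ {ψ} ∧
        ∃ w : Fin (Module.finrank ℂ (FixSubspace d n H)) →
            Matrix (Fin n → ZMod d) (Fin n → ZMod d) ℂ,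
          (∀ i, w i ∈ PauliSet d n) ∧
          LinearIndependent ℂ (fun i => (w i).mulVec ψ) ∧
          Submodule.span ℂ (Set.range fun i => (w i).mulVec ψ) =
            FixSubspace d n H := by
  classical
  have hHfin : H.Finite := pauli_finite.subset hHsub
  have hbot : FixSubspace d n H ≠ ⊥ := by
    intro h
    rw [h] at hK
    simp at hK
  obtain ⟨ψ₀, hψ₀, hψ₀0⟩ := Submodule.exists_mem_ne_zero_of_ne_bot hbot
  obtain ⟨J₀, hJ₀⟩ := Function.ne_iff.mp hψ₀0
  obtain ⟨D, hD⟩ : ∃ D : (Fin n → ZMod d) → Matrix (Fin n → ZMod d) (Fin n → ZMod d) ℂ,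
      ∀ U, D U = PP d n (-(U ⬝ᵥ J₀)) U 0 := ⟨_, fun _ => rfl⟩
  let B : AddSubgroup (Fin n → ZMod d) :=
    { carrier := {V | ∃ k U, PP d n k U V ∈ H}
      zero_mem' := ⟨0, 0, by rw [PP_zero]; exact hH1⟩
      add_mem' := by
        rintro V V' ⟨k, U, h⟩ ⟨k', U', h'⟩
        have := hHmul _ h _ h'
        rw [PP_mul] at this
        exact ⟨_, _, this⟩
      neg_mem' := by
        rintro V ⟨k, U, h⟩
        obtain ⟨b, hb, hb1⟩ := hHinv _ h
        obtain ⟨k', U', V', rfl⟩ := (mem_Pauli b).mp (hHsub hb)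
        rw [PP_mul, ← PP_zero] at hb1
        have hV := (PP_inj hb1).2.2
        rw [neg_eq_of_add_eq_zero_right hV]
        exact ⟨_, _, hb⟩ }
  have hB : ∀ k U V, PP d n k U V ∈ H → V ∈ B := fun k U V h => ⟨k, U, h⟩
  have hB' : ∀ V ∈ B, ∃ k U, PP d n k U V ∈ H := fun V h => h
  obtain ⟨M, hM⟩ : ∃ M : Set (Fin n → ZMod d), M = {U | ∀ V ∈ B, U ⬝ᵥ V = 0} := ⟨_, rfl⟩
  have hMmem : ∀ U, U ∈ M ↔ ∀ V ∈ B, U ⬝ᵥ V = 0 := by intro U; rw [hM]; rfl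
  have hcardBM : Nat.card B * Nat.card M = d ^ n := by rw [hM]; exact card_perp B
  have hMadd : ∀ U ∈ M, ∀ U' ∈ M, U + U' ∈ M := by
    intro U hU U' hU'
    rw [hMmem] at *
    intro V hV
    rw [add_dotProduct, hU V hV, hU' V hV, add_zero]
  have hMneg : ∀ U ∈ M, -U ∈ M := by
    intro U hU
    rw [hMmem] at *
    intro V hV
    rw [neg_dotProduct, hU V hV, neg_zero]
  have hM0 : (0 : Fin n → ZMod d) ∈ M := by
    rw [hMmem]; intro V _; exact zero_dotProduct _
  have hD0 : D 0 = 1 := by rw [hD, ← PP_zero]; simp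
  have hDmul : ∀ U U', D U * D U' = D (U + U') := by
    intro U U'
    rw [hD, hD, hD, PP_mul, add_dotProduct, dotProduct_zero, add_zero]
    congr 1
    ring
  have hDinj : ∀ U U', D U = D U' → U = U' := by
    intro U U' h
    rw [hD, hD] at h
    exact (PP_inj h).2.1
  have hDJ : ∀ U, D U J₀ J₀ = 1 := by
    intro U
    rw [hD]
    simp [PP]
  have hDcomm : ∀ h ∈ H, ∀ U ∈ M, h * D U = D U * h := by
    intro h hh U hU
    obtain ⟨k, U', V, rfl⟩ := (mem_Pauli h).mp (hHsub hh)
    rw [hD, PP_comm, dotProduct_zero, (hMmem U).mp hU V (hB _ _ _ hh)]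
    simp
  have hdiag : ∀ k U, PP d n k U 0 ∈ H → PP d n k U 0 = D U ∧ U ∈ M := by
    intro k U h
    constructor
    · have h1 := congrFun (hψ₀ _ h) J₀
      rw [PP_mulVec, sub_zero] at h1
      have h2 : ech d (k + U ⬝ᵥ J₀) = ech d 0 := by
        rw [AddChar.map_zero_eq_one]
        exact mul_right_cancel₀ hJ₀ (h1.trans (one_mul _).symm)
      rw [hD, eq_neg_of_add_eq_zero_left (ech_inj h2)]
    · rw [hMmem]
      intro V hV
      obtain ⟨k', U', h'⟩ := hB' V hV
      have h1 := hHcomm _ h _ h'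
      rw [PP_mul, PP_mul] at h1
      have h2 := (PP_inj h1).1
      rw [dotProduct_zero, add_comm k k'] at h2
      rw [sub_zero] at h2
      exact sub_eq_self.mp h2.symm
  obtain ⟨S, hS⟩ : ∃ S : Set (Matrix (Fin n → ZMod d) (Fin n → ZMod d) ℂ),
      ∀ s, s ∈ S ↔ ∃ h ∈ H, ∃ U ∈ M, s = h * D U :=
    ⟨{s | ∃ h ∈ H, ∃ U ∈ M, s = h * D U}, fun _ => Iff.rfl⟩
  have hSsub : S ⊆ PauliSet d n := by
    intro s hs
    obtain ⟨h, hh, U, hU, rfl⟩ := (hS s).mp hs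
    obtain ⟨k, U', V, rfl⟩ := (mem_Pauli h).mp (hHsub hh)
    rw [hD, PP_mul, mem_Pauli]
    exact ⟨_, _, _, rfl⟩
  have hS1 : 1 ∈ S := (hS 1).mpr ⟨1, hH1, 0, hM0, by rw [hD0, mul_one]⟩
  have hswap : ∀ h, ∀ h' ∈ H, ∀ U ∈ M, ∀ U',
      (h * D U) * (h' * D U') = (h * h') * D (U + U') := by
    intro h h' hh' U hU U'
    rw [← hDmul, mul_assoc h, ← mul_assoc (D U), ← hDcomm h' hh' U hU]
    simp only [mul_assoc]
  have hSmul : ∀ a ∈ S, ∀ b ∈ S, a * b ∈ S := by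
    intro a ha b hb
    obtain ⟨h, hh, U, hU, rfl⟩ := (hS a).mp ha
    obtain ⟨h', hh', U', hU', rfl⟩ := (hS b).mp hb
    rw [hswap h h' hh' U hU U', hS]
    exact ⟨_, hHmul _ hh _ hh', _, hMadd _ hU _ hU', rfl⟩
  have hSinv : ∀ a ∈ S, ∃ b ∈ S, a * b = 1 := by
    intro a ha
    obtain ⟨h, hh, U, hU, rfl⟩ := (hS a).mp ha
    obtain ⟨h', hh', hhh⟩ := hHinv h hh
    refine ⟨h' * D (-U), (hS _).mpr ⟨_, hh', _, hMneg _ hU, rfl⟩, ?_⟩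
    rw [hswap h h' hh' U hU, hhh, add_neg_cancel, hD0, one_mul]
  have hScomm : ∀ a ∈ S, ∀ b ∈ S, a * b = b * a := by
    intro a ha b hb
    obtain ⟨h, hh, U, hU, rfl⟩ := (hS a).mp ha
    obtain ⟨h', hh', U', hU', rfl⟩ := (hS b).mp hb
    rw [hswap h h' hh' U hU U', hswap h' h hh U' hU' U, hHcomm _ hh _ hh', add_comm]
  have hSscal : ∀ c : ℂ, c • (1 : Matrix (Fin n → ZMod d) (Fin n → ZMod d) ℂ) ∈ S →
        c • (1 : Matrix (Fin n → ZMod d) (Fin n → ZMod d) ℂ) = 1 := by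
    intro c hc
    obtain ⟨h, hh, U, hU, he⟩ := (hS _).mp hc
    obtain ⟨k, U', V, rfl⟩ := (mem_Pauli h).mp (hHsub hh)
    have hV : V = 0 := by
      by_contra hV
      rw [hD, PP_mul] at he
      have := congrFun (congrFun he V) 0
      simp [PP, hV] at this
      exact ech_ne _ this.symm
    subst hV
    rw [(hdiag k U' hh).1, hDmul] at he
    have := congrFun (congrFun he J₀) J₀
    rw [hDJ] at this
    simp at this
    rw [this, one_smul]
  have hHS : H ⊆ S := fun h hh => (hS h).mpr ⟨h, hh, 0, hM0, by rw [hD0, mul_one]⟩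
  have hScard : Nat.card S = d ^ n := by
    rw [← hcardBM, ← Nat.card_prod]
    choose! kk uu hku using hB'
    symm
    refine Nat.card_eq_of_bijective (fun p : B × M =>
      (⟨PP d n (kk p.1) (uu p.1) p.1 * D p.2,
        (hS _).mpr ⟨_, hku _ p.1.2, _, p.2.2, rfl⟩⟩ : S)) ⟨?_, ?_⟩
    · rintro ⟨⟨V, hV⟩, ⟨U, hU⟩⟩ ⟨⟨V', hV'⟩, ⟨U', hU'⟩⟩ h
      have h1 := congrArg Subtype.val h
      simp only [hD, PP_mul] at h1
      obtain ⟨-, h2, h3⟩ := PP_inj h1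
      have h4 : V = V' := by simpa using h3
      subst h4
      have h5 : U = U' := by simpa using h2
      subst h5
      rfl
    · rintro ⟨s, hs⟩
      obtain ⟨h, hh, U, hU, rfl⟩ := (hS _).mp hs
      obtain ⟨k, U', V, rfl⟩ := (mem_Pauli h).mp (hHsub hh)
      have hV := hB _ _ _ hh
      obtain ⟨g, hg, hg1⟩ := hHinv _ (hku V hV)
      have hmem := hHmul _ hg _ hh
      obtain ⟨k₂, U₂, V₂, rfl⟩ := (mem_Pauli g).mp (hHsub hg)
      have hVV : V₂ + V = 0 := by
        rw [PP_mul, ← PP_zero] at hg1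
        rw [add_comm]
        exact (PP_inj hg1).2.2
      have he := PP_mul k₂ k U₂ V₂ U' V
      rw [hVV] at he
      rw [he] at hmem
      obtain ⟨h6, h7⟩ := hdiag _ _ hmem
      refine ⟨⟨⟨V, hV⟩, ⟨U₂ + U' + U, hMadd _ h7 _ hU⟩⟩, ?_⟩
      apply Subtype.ext
      change PP d n (kk V) (uu V) V * D (U₂ + U' + U) = PP d n k U' V * D U
      rw [← hDmul, ← h6, ← he, ← mul_assoc, ← mul_assoc, hg1, one_mul]
  have hSfin : S.Finite := pauli_finite.subset hSsub
  obtain ⟨FS, rfl⟩ := hSfin.exists_finset_coe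
  obtain ⟨FH, rfl⟩ := hHfin.exists_finset_coe
  have hrank := finrank_fix FS hSsub hS1 hSmul hSinv hSscal (by simpa using hScard)
  obtain ⟨⟨ψ, hψ⟩, hψ0, hψspan⟩ := finrank_eq_one_iff'.mp hrank
  have hψne : ψ ≠ 0 := fun h => hψ0 (Subtype.ext h)
  have hψH : ψ ∈ FixSubspace d n (FH : Set _) := fun s hs => hψ s (hHS hs)
  refine ⟨FS, hSsub, hS1, hSmul, hSinv, hScomm, hSscal, hHS, hScard, ψ, hψH, hψne, ?_, ?_⟩
  · apply le_antisymm
    · intro y hy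
      obtain ⟨c, hc⟩ := hψspan ⟨y, hy⟩
      rw [Submodule.mem_span_singleton]
      exact ⟨c, congrArg Subtype.val hc⟩
    · rw [Submodule.span_singleton_le_iff_mem]
      exact hψ
  · have hsp := span_fix FH hHsub hH1 hHmul hHinv ψ hψne hψH
    have hex := Submodule.exists_fun_fin_finrank_span_eq ℂ
      {y | y ∈ FixSubspace d n (FH : Set _) ∧ ∃ w ∈ PauliSet d n, y = w.mulVec ψ}
    rw [hsp] at hex
    obtain ⟨f, hf, hfs, hfl⟩ := hex
    choose w hw hfw using fun i => (hf i).2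
    have hfe : f = fun i => (w i).mulVec ψ := funext hfw
    rw [hfe] at hfs hfl
    exact ⟨w, hw, hfl, hfs⟩
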